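/- For m ≥ 1 and n > 2m+1, the graphs obtained by taking the parallel connection of the wheel-like graph G_m with the n-cycle C_n along the edge {0,i}, for m ≤ i ≤ 2m-1, are pairwise non-isomorphic; specifically, the resulting graph has longest cycle of length (n-1)+i. -/

import Mathlib

/-- The graph `G_m` on vertex set `ℤ/(2m)` with edges `{i, i+1}` for `1 ≤ i < 2m - 1`
and `{0, i}` for `1 ≤ i < 2m`. -/
def Gm (m : ℕ) : SimpleGraph (ZMod (2 * m)) :=
  SimpleGraph.fromRel fun s t =>
    (∃ i : ℕ, 1 ≤ i ∧ i < 2 * m - 1 ∧ s = (i : ZMod (2 * m)) ∧ t = (i : ZMod (2 * m)) + 1) ∨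
    (∃ i : ℕ, 1 ≤ i ∧ i < 2 * m ∧ s = 0 ∧ t = (i : ZMod (2 * m)))

/-- The parallel connection of `G_m` with the `n`-cycle along the edge `{0, i}`:
the edge is kept, and a path of length `n - 1` (with `n - 2` new internal vertices)
is attached between the vertices `0` and `i`. -/
def parConn (m n i : ℕ) : SimpleGraph (ZMod (2 * m) ⊕ Fin (n - 2)) :=
  SimpleGraph.fromRel fun s t =>
    (∃ a b, s = Sum.inl a ∧ t = Sum.inl b ∧ (Gm m).Adj a b) ∨
    (∃ j : Fin (n - 2), (j : ℕ) = 0 ∧ s = Sum.inl 0 ∧ t = Sum.inr j) ∨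
    (∃ j k : Fin (n - 2), (k : ℕ) = (j : ℕ) + 1 ∧ s = Sum.inr j ∧ t = Sum.inr k) ∨
    (∃ j : Fin (n - 2), (j : ℕ) = n - 3 ∧ s = Sum.inr j ∧ t = Sum.inl (i : ZMod (2 * m)))

/-!
A cycle cannot meet more than `k` components of what is left of a graph after deleting `k ≥ 1`
vertices. Deleting `0` and `i` from the parallel connection along `{0, i}` leaves three parts, of
`i - 1`, `2m - 1 - i` and `n - 2` vertices, so every cycle misses one of them. For `m ≤ i` and
`m < n` the smallest part is the second, and the cycle formed by `0, 1, …, i` and the new path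
misses exactly that part. Hence the longest cycle has
`(2m + n - 2) - (2m - 1 - i) = (n - 1) + i` vertices, and the circumference recovers `i`.
-/

open SimpleGraph Finset

section CutSet

variable {V α : Type*} [DecidableEq V] [DecidableEq α] {G : SimpleGraph V} {S : Finset V}
  {f : V → α} {u v : V}

theorem card_image_support_sdiff_le_of_isPath
    (hf : ∀ ⦃a b⦄, G.Adj a b → a ∉ S → b ∉ S → f a = f b)
    {p : G.Walk u v} (hp : p.IsPath) :
    #((p.support.toFinset \ S).image f) ≤ #(p.support.toFinset ∩ S) + if u ∈ S then 0 else 1 := by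
  induction p with
  | @nil u =>
    by_cases hu : u ∈ S
    · simp [hu, sdiff_eq_empty_iff_subset.2 (singleton_subset_iff.2 hu)]
    · simpa [hu] using card_image_le.trans (card_le_card (sdiff_subset (s := {u}) (t := S)))
  | @cons u w v huw p ih =>
    rw [Walk.cons_isPath_iff] at hp
    obtain ⟨hp, hup⟩ := hp
    specialize ih hp
    rw [Walk.support_cons, List.toFinset_cons]
    by_cases hu : u ∈ S
    · rw [insert_sdiff_of_mem _ hu, insert_inter_of_mem hu, card_insert_of_notMem (by simp [hup])]
      simp only [hu, if_true]
      split_ifs at ih <;> omega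
    · rw [insert_sdiff_of_notMem _ hu, insert_inter_of_notMem hu, image_insert]
      simp only [hu, if_false]
      by_cases hw : w ∈ S
      · simp only [hw, if_true] at ih
        exact (card_insert_le _ _).trans (by omega)
      · have hfu : f u ∈ (p.support.toFinset \ S).image f :=
          mem_image.2 ⟨w, by simp [hw], (hf huw hu hw).symm⟩
        rw [insert_eq_of_mem hfu]
        simpa only [hw, if_false] using ih

theorem toFinset_support_tail_of_isCycle {c : G.Walk v v} (hc : c.IsCycle) :
    c.tail.support.toFinset = c.support.toFinset := by
  have hv : v ∈ c.support.tail := c.end_mem_tail_support hc.not_nil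
  rw [Walk.support_tail_of_not_nil _ hc.not_nil, ← c.cons_tail_support, List.toFinset_cons,
    List.tail_cons, insert_eq_of_mem (List.mem_toFinset.2 hv)]

theorem card_toFinset_support_of_isCycle {c : G.Walk v v} (hc : c.IsCycle) :
    #c.support.toFinset = c.length := by
  rw [← toFinset_support_tail_of_isCycle hc,
    List.toFinset_card_of_nodup hc.isPath_tail.support_nodup, Walk.length_support,
    Walk.length_tail_add_one hc.not_nil]

theorem card_image_support_sdiff_le_of_isCycle
    (hf : ∀ ⦃a b⦄, G.Adj a b → a ∉ S → b ∉ S → f a = f b) (hS : S.Nonempty)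
    {c : G.Walk v v} (hc : c.IsCycle) :
    #((c.support.toFinset \ S).image f) ≤ #S := by
  by_cases hcS : ∃ u ∈ c.support, u ∈ S
  · obtain ⟨u, huc, huS⟩ := hcS
    have hrot := hc.rotate huc
    have hsupp : (c.rotate u huc).tail.reverse.support.toFinset = c.support.toFinset := by
      rw [Walk.support_reverse, List.toFinset_reverse, toFinset_support_tail_of_isCycle hrot]
      ext x
      simp [Walk.mem_support_rotate_iff]
    have hpath := card_image_support_sdiff_le_of_isPath hf hrot.isPath_tail.reverse
    rw [if_pos huS, add_zero, hsupp] at hpath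
    exact hpath.trans (card_le_card inter_subset_right)
  · push Not at hcS
    have hinter : c.support.toFinset ∩ S = ∅ := by
      rw [← disjoint_iff_inter_eq_empty, Finset.disjoint_left]
      simpa using hcS
    have hpath := card_image_support_sdiff_le_of_isPath hf hc.isPath_tail
    rw [toFinset_support_tail_of_isCycle hc, hinter, card_empty, zero_add] at hpath
    calc _ ≤ _ := hpath
      _ ≤ 1 := by split_ifs <;> simp
      _ ≤ #S := hS.card_pos

theorem exists_length_add_card_le_of_isCycle [Fintype V] [Fintype α]
    (hf : ∀ ⦃a b⦄, G.Adj a b → a ∉ S → b ∉ S → f a = f b) (hS : S.Nonempty)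
    (hSα : #S < Fintype.card α) {c : G.Walk v v} (hc : c.IsCycle) :
    ∃ e, c.length + #{x | x ∉ S ∧ f x = e} ≤ Fintype.card V := by
  obtain ⟨e, -, he⟩ := exists_mem_notMem_of_card_lt_card (s := (c.support.toFinset \ S).image f)
    (t := univ) ((card_image_support_sdiff_le_of_isCycle hf hS hc).trans_lt hSα)
  have hdisj : Disjoint c.support.toFinset ({x | x ∉ S ∧ f x = e} : Finset V) := by
    refine Finset.disjoint_left.2 fun x hxc hx => he ?_
    obtain ⟨hxS, rfl⟩ := (mem_filter_univ x).1 hx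
    exact mem_image_of_mem f (mem_sdiff.2 ⟨hxc, hxS⟩)
  refine ⟨e, ?_⟩
  rw [← card_toFinset_support_of_isCycle hc, ← card_union_of_disjoint hdisj]
  exact card_le_univ _

end CutSet

section CycleLengths

variable {V W : Type*} {G : SimpleGraph V} {H : SimpleGraph W}

/-- The set of lengths of the cycles of `G`; the circumference of `G` is its greatest element. -/
def cycleLengths (G : SimpleGraph V) : Set ℕ :=
  {L | ∃ (v : V) (c : G.Walk v v), c.IsCycle ∧ c.length = L}

theorem cycleLengths_subset_of_isContained (h : G ⊑ H) : cycleLengths G ⊆ cycleLengths H := by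
  rintro _ ⟨v, c, hc, rfl⟩
  obtain ⟨φ⟩ := h
  exact ⟨_, c.map φ.toHom, hc.map φ.injective, c.length_map _⟩

theorem cycleLengths_eq_of_iso (e : G ≃g H) : cycleLengths G = cycleLengths H :=
  (cycleLengths_subset_of_isContained ⟨e.toCopy⟩).antisymm
    (cycleLengths_subset_of_isContained ⟨e.symm.toCopy⟩)

theorem length_add_length_add_two_mem_cycleLengths {u v x y : V} {p : G.Walk u v} {q : G.Walk x y}
    (hp : p.IsPath) (hq : q.IsPath) (hpq : p.support.Disjoint q.support) (hvx : G.Adj v x)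
    (hyu : G.Adj y u) (hlen : 1 ≤ p.length + q.length) :
    p.length + q.length + 2 ∈ cycleLengths G := by
  have hp' : (p.concat hvx).IsPath := hp.concat (fun hx => hpq hx q.start_mem_support) hvx
  have hq' : (q.concat hyu).IsPath := hq.concat (hpq p.start_mem_support) hyu
  refine ⟨u, (p.concat hvx).append (q.concat hyu), hp'.isCycle_append hq' ?_ ?_, ?_⟩
  · have hpnodup := hp.support_nodup
    have hqnodup := hq.support_nodup
    rw [← p.cons_tail_support] at hpq hpnodup
    rw [← q.cons_tail_support] at hpq hqnodup
    rw [Walk.support_concat, Walk.support_concat, ← p.cons_tail_support, ← q.cons_tail_support]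
    grind [List.Disjoint]
  · simp only [Walk.length_concat]
    omega
  · simp only [Walk.length_append, Walk.length_concat]
    omega

theorem exists_isPath_of_injective {k : ℕ} {f : Fin (k + 1) → V} (hf : Function.Injective f)
    (hadj : ∀ j : Fin k, G.Adj (f j.castSucc) (f j.succ)) :
    ∃ p : G.Walk (f 0) (f (Fin.last k)),
      p.IsPath ∧ p.length = k ∧ ∀ x ∈ p.support, x ∈ Set.range f := by
  have hchain : (List.ofFn f).IsChain G.Adj :=
    List.isChain_ofFn.2 fun j hj => hadj ⟨j, Nat.lt_of_succ_lt_succ hj⟩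
  have hne : List.ofFn f ≠ [] := by simp
  have hhead : (List.ofFn f).head hne = f 0 := List.head_ofFn hne
  have hlast : (List.ofFn f).getLast hne = f (Fin.last k) := List.getLast_ofFn_succ f
  refine ⟨(Walk.ofSupport _ hne hchain).copy hhead hlast, ?_, ?_, ?_⟩
  · simpa only [Walk.isPath_def, Walk.support_copy, Walk.support_ofSupport]
      using List.nodup_ofFn.2 hf
  · rw [Walk.length_copy, Walk.length_ofSupport, List.length_ofFn, Nat.add_sub_cancel]
  · intro x hx
    rwa [Walk.support_copy, Walk.support_ofSupport, List.mem_ofFn] at hx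

end CycleLengths

namespace Gm

variable {m : ℕ}

theorem adj_natCast_succ {a : ℕ} (ha : a + 1 < 2 * m) :
    (Gm m).Adj (a : ZMod (2 * m)) ((a + 1 : ℕ) : ZMod (2 * m)) := by
  rw [Gm, fromRel_adj]
  refine ⟨fun h => ?_, Or.inl ?_⟩
  · have := CharP.natCast_injOn_Iio (ZMod (2 * m)) (2 * m) (Set.mem_Iio.2 (by omega)) ha h
    omega
  · rcases Nat.eq_zero_or_pos a with rfl | ha'
    · exact Or.inr ⟨1, le_rfl, by omega, by simp, by simp⟩
    · exact Or.inl ⟨a, ha', by omega, rfl, by push_cast; rfl⟩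

theorem val_add_one_eq_or_of_adj {a b : ZMod (2 * m)} (h : (Gm m).Adj a b) (ha : a ≠ 0)
    (hb : b ≠ 0) : a.val + 1 = b.val ∨ b.val + 1 = a.val := by
  have hval {k : ℕ} (hk : k < 2 * m - 1) :
      (k : ZMod (2 * m)).val + 1 = ((k : ZMod (2 * m)) + 1).val := by
    rw [← Nat.cast_succ, ZMod.val_natCast_of_lt (by omega), ZMod.val_natCast_of_lt (by omega)]
  rw [Gm, fromRel_adj] at h
  rcases h with ⟨-, (⟨k, -, hk, rfl, rfl⟩ | ⟨_, -, -, rfl, -⟩) |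
    (⟨k, -, hk, rfl, rfl⟩ | ⟨_, -, -, rfl, -⟩)⟩
  · exact Or.inl (hval hk)
  · exact absurd rfl ha
  · exact Or.inr (hval hk)
  · exact absurd rfl hb

end Gm

namespace parConn

variable {m n i : ℕ}

theorem adj_inl_inl {a b : ZMod (2 * m)} :
    (parConn m n i).Adj (Sum.inl a) (Sum.inl b) ↔ (Gm m).Adj a b := by
  simpa [parConn, adj_comm _ b a] using Adj.ne

theorem adj_inl_inr {a : ZMod (2 * m)} {j : Fin (n - 2)} :
    (parConn m n i).Adj (Sum.inl a) (Sum.inr j) ↔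
      (j : ℕ) = 0 ∧ a = 0 ∨ (j : ℕ) = n - 3 ∧ a = i := by
  simp [parConn]

theorem adj_inr_inr {j k : Fin (n - 2)} :
    (parConn m n i).Adj (Sum.inr j) (Sum.inr k) ↔ (pathGraph (n - 2)).Adj j k := by
  have hne : (j : ℕ) + 1 = k ∨ (k : ℕ) + 1 = j → j ≠ k := by omega
  simpa [parConn, pathGraph_adj, eq_comm] using hne

theorem sub_one_add_mem_cycleLengths (hn : 3 ≤ n) (hi : 1 ≤ i) (hi' : i < 2 * m) :
    (n - 1) + i ∈ cycleLengths (parConn m n i) := by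
  -- The cycle runs through `0, 1, …, i` and returns to `0` along the new path.
  obtain ⟨k, rfl⟩ := Nat.exists_eq_add_of_le' hn
  obtain ⟨p, hp, hplen, hpsupp⟩ := exists_isPath_of_injective (G := parConn m (k + 3) i)
    (f := fun a : Fin (i + 1) => Sum.inl ((a : ℕ) : ZMod (2 * m)))
    (fun a b hab => Fin.ext <| CharP.natCast_injOn_Iio (ZMod (2 * m)) (2 * m)
      (a.is_le.trans_lt hi') (b.is_le.trans_lt hi') (Sum.inl_injective hab))
    fun a => adj_inl_inl.2 (Gm.adj_natCast_succ ((Nat.succ_le_of_lt a.isLt).trans_lt hi'))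
  obtain ⟨q, hq, hqlen, hqsupp⟩ := exists_isPath_of_injective (G := parConn m (k + 3) i)
    (f := fun j : Fin (k + 1) => Sum.inr j) Sum.inr_injective
    fun j => adj_inr_inr.2 (pathGraph_adj.2 (Or.inl rfl))
  have hdisj : p.support.Disjoint q.reverse.support := fun x hxp hxq => by
    obtain ⟨a, rfl⟩ := hpsupp x hxp
    obtain ⟨j, hj⟩ := hqsupp _ (by simpa using hxq)
    exact Sum.inr_ne_inl hj
  have hcycle := length_add_length_add_two_mem_cycleLengths hp hq.reverse hdisj
    (adj_inl_inr.2 (Or.inr ⟨rfl, rfl⟩)) (adj_inl_inr.2 (Or.inl ⟨rfl, Nat.cast_zero⟩)).symm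
    (by omega)
  rw [Walk.length_reverse, hplen, hqlen] at hcycle
  rwa [show k + 3 - 1 + i = i + k + 2 by omega]

/-- The vertices `0` and `i` along which the new path is attached. -/
def terminals (m n i : ℕ) : Finset (ZMod (2 * m) ⊕ Fin (n - 2)) := {Sum.inl 0, Sum.inl ↑i}

/-- Numbers the three parts into which removing `terminals m n i` cuts `parConn m n i`: the
vertices `1, …, i - 1`, the vertices `i + 1, …, 2m - 1` and the interior of the new path. The values
on the terminals are irrelevant. -/
def side (m n i : ℕ) : ZMod (2 * m) ⊕ Fin (n - 2) → Fin 3 :=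
  Sum.elim (fun z => if z.val < i then 0 else 1) fun _ => 2

theorem side_inl_eq_of_adj [NeZero (2 * m)] {a b : ZMod (2 * m)} (hab : (Gm m).Adj a b)
    (ha : Sum.inl a ∉ terminals m n i) (hb : Sum.inl b ∉ terminals m n i) :
    side m n i (Sum.inl a) = side m n i (Sum.inl b) := by
  simp only [terminals, mem_insert, mem_singleton, Sum.inl.injEq, not_or] at ha hb
  have hval {z : ZMod (2 * m)} (hz : z ≠ i) : z.val ≠ i := by
    rintro rfl
    exact hz (ZMod.natCast_zmod_val z).symm
  have hlt : a.val < i ↔ b.val < i := by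
    have := hval ha.2
    have := hval hb.2
    have := Gm.val_add_one_eq_or_of_adj hab ha.1 hb.1
    omega
  simp only [side, Sum.elim_inl, hlt]

theorem side_eq_of_adj [NeZero (2 * m)] ⦃x y : ZMod (2 * m) ⊕ Fin (n - 2)⦄
    (hxy : (parConn m n i).Adj x y) (hx : x ∉ terminals m n i) (hy : y ∉ terminals m n i) :
    side m n i x = side m n i y := by
  rcases x with a | j <;> rcases y with b | k
  · exact side_inl_eq_of_adj (adj_inl_inl.1 hxy) hx hy
  · rcases adj_inl_inr.1 hxy with ⟨-, rfl⟩ | ⟨-, rfl⟩ <;> simp [terminals] at hx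
  · rcases adj_inl_inr.1 hxy.symm with ⟨-, rfl⟩ | ⟨-, rfl⟩ <;> simp [terminals] at hy
  · rfl

theorem card_le_card_side_eq [NeZero (2 * m)] {s : Finset ℕ} {e : Fin 3} (hi : i < 2 * m)
    (hs : ∀ k ∈ s, 0 < k ∧ k < 2 * m ∧ k ≠ i ∧ (if k < i then 0 else 1) = e) :
    #s ≤ #{x | x ∉ terminals m n i ∧ side m n i x = e} := by
  have hinj := CharP.natCast_injOn_Iio (ZMod (2 * m)) (2 * m)
  refine card_le_card_of_injOn (fun k => Sum.inl ↑k) (fun k hk => ?_) fun k hk l hl hkl =>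
    hinj (hs k hk).2.1 (hs l hl).2.1 (Sum.inl_injective hkl)
  obtain ⟨hpos, hlt, hne, rfl⟩ := hs k hk
  have hzero : (k : ZMod (2 * m)) ≠ 0 := fun h =>
    hpos.ne' (hinj hlt (Set.mem_Iio.2 (by omega)) (h.trans Nat.cast_zero.symm))
  have hi : (k : ZMod (2 * m)) ≠ i := hinj.ne hlt hi hne
  simp [terminals, side, hzero, hi, ZMod.val_natCast_of_lt hlt]

theorem min_le_card_side_eq [NeZero (2 * m)] (hi : i < 2 * m) (e : Fin 3) :
    min (min (i - 1) (2 * m - 1 - i)) (n - 2) ≤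
      #{x | x ∉ terminals m n i ∧ side m n i x = e} := by
  fin_cases e
  · have h := card_le_card_side_eq (n := n) (s := Ioo 0 i) (e := 0) hi (by grind)
    rw [Nat.card_Ioo] at h
    exact le_trans (by omega) h
  · have h := card_le_card_side_eq (n := n) (s := Ioo i (2 * m)) (e := 1) hi (by grind)
    rw [Nat.card_Ioo] at h
    exact le_trans (by omega) h
  · have h : #(univ.map ⟨Sum.inr, Sum.inr_injective⟩) ≤
        #{x | x ∉ terminals m n i ∧ side m n i x = 2} :=
      card_le_card fun x hx => by
        obtain ⟨j, -, rfl⟩ := mem_map.1 hx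
        simp [terminals, side]
    rw [card_map, card_univ, Fintype.card_fin] at h
    exact (min_le_right _ _).trans h

theorem length_add_min_le_of_isCycle (hi : i < 2 * m) {v : ZMod (2 * m) ⊕ Fin (n - 2)}
    {c : (parConn m n i).Walk v v} (hc : c.IsCycle) :
    c.length + min (min (i - 1) (2 * m - 1 - i)) (n - 2) ≤ 2 * m + (n - 2) := by
  have : NeZero (2 * m) := ⟨by omega⟩
  have hcard : #(terminals m n i) < Fintype.card (Fin 3) := by
    rw [Fintype.card_fin]
    exact Nat.lt_succ_of_le card_le_two
  obtain ⟨e, he⟩ := exists_length_add_card_le_of_isCycle side_eq_of_adj ⟨_, mem_insert_self _ _⟩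
    hcard hc
  rw [Fintype.card_sum, ZMod.card, Fintype.card_fin] at he
  exact (Nat.add_le_add_left (min_le_card_side_eq hi e) _).trans he

theorem isGreatest_cycleLengths (hn : 3 ≤ n) (hmi : m ≤ i) (hi : i < 2 * m)
    (hin : 2 * m + 1 ≤ i + n) : IsGreatest (cycleLengths (parConn m n i)) ((n - 1) + i) := by
  refine ⟨sub_one_add_mem_cycleLengths hn (by omega) hi, ?_⟩
  rintro _ ⟨v, c, hc, rfl⟩
  have := length_add_min_le_of_isCycle hi hc
  omega

end parConn

theorem parConn_longest_cycle_and_nonisomorphic_general (m n : ℕ) (hm : 1 ≤ m) (hn : 3 ≤ n)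
    (hmn : m < n) :
    (∀ i : ℕ, m ≤ i → i ≤ 2 * m - 1 →
      ((∃ (v : ZMod (2 * m) ⊕ Fin (n - 2)) (c : (parConn m n i).Walk v v),
          c.IsCycle ∧ c.length = (n - 1) + i) ∧
        ∀ (v : ZMod (2 * m) ⊕ Fin (n - 2)) (c : (parConn m n i).Walk v v),
          c.IsCycle → c.length ≤ (n - 1) + i)) ∧
    (∀ i j : ℕ, m ≤ i → i ≤ 2 * m - 1 → m ≤ j → j ≤ 2 * m - 1 → i ≠ j →
      IsEmpty ((parConn m n i) ≃g (parConn m n j))) := by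
  have hgreatest {i : ℕ} (hmi : m ≤ i) (hi : i ≤ 2 * m - 1) :
      IsGreatest (cycleLengths (parConn m n i)) ((n - 1) + i) :=
    parConn.isGreatest_cycleLengths hn hmi (by omega) (by omega)
  refine ⟨fun i hmi hi => ?_, fun i j hmi hi hmj hj hij => ⟨fun e => hij ?_⟩⟩
  · obtain ⟨hmem, hub⟩ := hgreatest hmi hi
    exact ⟨hmem, fun v c hc => hub ⟨v, c, hc, rfl⟩⟩
  · have hj := hgreatest hmj hj
    rw [← cycleLengths_eq_of_iso e] at hj
    exact Nat.add_left_cancel ((hgreatest hmi hi).unique hj)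

/-- For `m ≥ 1` and `n > 2m + 1`, the parallel connections of `G_m` with the `n`-cycle
along the edges `{0, i}` for `m ≤ i ≤ 2m - 1` have longest cycle of length `(n-1) + i`;
consequently they are pairwise non-isomorphic. -/
theorem parConn_longest_cycle_and_nonisomorphic (m n : ℕ) (hm : 1 ≤ m) (hn : 2 * m + 1 < n) :
    (∀ i : ℕ, m ≤ i → i ≤ 2 * m - 1 →
      ((∃ (v : ZMod (2 * m) ⊕ Fin (n - 2)) (c : (parConn m n i).Walk v v),
          c.IsCycle ∧ c.length = (n - 1) + i) ∧
        ∀ (v : ZMod (2 * m) ⊕ Fin (n - 2)) (c : (parConn m n i).Walk v v),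
          c.IsCycle → c.length ≤ (n - 1) + i)) ∧
    (∀ i j : ℕ, m ≤ i → i ≤ 2 * m - 1 → m ≤ j → j ≤ 2 * m - 1 → i ≠ j →
      IsEmpty ((parConn m n i) ≃g (parConn m n j))) := by
  exact parConn_longest_cycle_and_nonisomorphic_general m n hm (by omega) (by omega)
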